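/- Let I, d, K, J be positive integers, let X ⊆ {0,1}^I × ℝ^d be nonempty, let g : {0,1}^I × ℝ^d → ℝ, and let Q : {0,1}^I × {1,…,K} → ℝ. Let ξ¹,…,ξ^K ∈ ℝ^J, γ, η ∈ ℝ, and let μ : {0,1}^I → ℝ^J and S : {0,1}^I → ℝ^{J×J} be such that S(x) is symmetric positive definite for every x; for x ∈ {0,1}^I set P₃(x) = {p ∈ ℝ^K : p ≥ 0, Σ_k p_k = 1, (Σ_k p_k ξᵏ − μ(x))ᵀ S(x)⁻¹ (Σ_k p_k ξᵏ − μ(x)) ≤ γ, and η S(x) − Σ_k p_k (ξᵏ − μ(x))(ξᵏ − μ(x))ᵀ is positive semidefinite}. Assume the Slater condition: for every x in the projection X̂ = {x : ∃ y, (x,y) ∈ X} there exists p ∈ ℝ^K with p ≥ 0, Σ_k p_k = 1, (Σ_k p_k ξᵏ − μ(x))ᵀ S(x)⁻¹ (Σ_k p_k ξᵏ − μ(x)) < γ, and η S(x) − Σ_k p_k (ξᵏ − μ(x))(ξᵏ − μ(x))ᵀ positive definite. Then inf over (x,y) ∈ X of [ g(x,y) + sup_{p ∈ P₃(x)} Σ_{k=1}^K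 p_k Q(x,k) ] equals inf of g(x,y) + s + S(x) • z₁ − 2 μ(x)ᵀ z₂ + γ z₃ + η (S(x) • Y) over all (x,y) ∈ X, s ∈ ℝ, z₁ ∈ ℝ^{J×J}, z₂ ∈ ℝ^J, z₃ ∈ ℝ, Y ∈ ℝ^{J×J}, subject to: the (J+1)×(J+1) block matrix Z = [[z₁, z₂],[z₂ᵀ, z₃]] is positive semidefinite, Y is positive semidefinite, and s − 2 z₂ᵀ ξᵏ + ((ξᵏ − μ(x))(ξᵏ − μ(x))ᵀ) • Y ≥ Q(x,k) for every k ∈ {1,…,K}. -/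

import Mathlib

open scoped BigOperators
open Matrix

/-- Frobenius inner product `A • B = trace(Aᵀ B) = Σᵢⱼ Aᵢⱼ Bᵢⱼ`. -/
def frob {n : Type*} [Fintype n] (A B : Matrix n n ℝ) : ℝ := ∑ i, ∑ j, A i j * B i j

/-- The block matrix `Z = [[z₁, z₂], [z₂ᵀ, z₃]]`. -/
def blockMat {J : ℕ} (z₁ : Matrix (Fin J) (Fin J) ℝ) (z₂ : Fin J → ℝ) (z₃ : ℝ) :
    Matrix (Fin J ⊕ Unit) (Fin J ⊕ Unit) ℝ :=
  Matrix.fromBlocks z₁ (Matrix.of fun i _ => z₂ i) (Matrix.of fun _ j => z₂ j)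
    (Matrix.of fun _ _ => z₃)

/-- Type 3 (general moment-based) ambiguity set with finite support
`ξ¹,…,ξ^K ∈ ℝ^J`, estimated mean `μ`, positive definite matrix `S`, scalars `γ, η`. -/
def Type3Set (K J : ℕ) (ξ : Fin K → Fin J → ℝ) (μ : Fin J → ℝ)
    (S : Matrix (Fin J) (Fin J) ℝ) (γ η : ℝ) : Set (Fin K → ℝ) :=
  {p | (∀ k, 0 ≤ p k) ∧ (∑ k, p k) = 1 ∧
    (fun j => (∑ k, p k * ξ k j) - μ j) ⬝ᵥ (S⁻¹ *ᵥ fun j => (∑ k, p k * ξ k j) - μ j) ≤ γ ∧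
    (η • S -
      ∑ k, p k • Matrix.vecMulVec (fun j => ξ k j - μ j) (fun j => ξ k j - μ j)).PosSemidef}

/-!
For a fixed decision the inner supremum is a conic program over the simplex: by the Schur complement
the mean constraint says that the `p`-average of the block matrices `[[S, ξᵏ - μ], [·, γ]]` is
positive semidefinite, and the covariance constraint says the same of the average of
`η S - (ξᵏ - μ)(ξᵏ - μ)ᵀ`. Write `aₖ` for this pair of matrices and `C` for the cone of pairs of
positive semidefinite matrices. For `c` above the supremum, the image of the simplex under
`p ↦ (∑ pₖ qₖ - c, ∑ pₖ aₖ)` misses the closed cone `ℝ₊ × C`. This image is compact, so a hyperplane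
has the cone on one side and the image strictly on the other, and the absence of a duality gap needs
only one feasible point. The positive semidefinite cone is self-dual, hence the multipliers are `Z`
and `Y`. Thus the inner supremum is the greatest lower bound of the dual values, and minimizing over
the decision merges the two infima.
-/

section Order

theorem sInf_eq_sInf_of_lowerBounds_eq {α : Type*} [ConditionallyCompleteLinearOrder α]
    {s t : Set α} (hs : s.Nonempty) (ht : t.Nonempty) (h : lowerBounds s = lowerBounds t) :
    sInf s = sInf t := by
  have hbdd_iff : BddBelow s ↔ BddBelow t := by rw [BddBelow, h, BddBelow]
  by_cases hbdd : BddBelow s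
  · exact (isGLB_csInf hs hbdd).unique <|
      (isGLB_congr h).mpr (isGLB_csInf ht (hbdd_iff.mp hbdd))
  · rw [csInf_of_not_bddBelow hbdd, csInf_of_not_bddBelow (mt hbdd_iff.mpr hbdd)]

theorem sInf_add_eq_sInf_add_of_isGLB {D α : Type*} [ConditionallyCompleteLinearOrder α]
    [NoTopOrder α] [AddCommGroup α] [IsOrderedAddMonoid α] {X : Set D} (hX : X.Nonempty)
    (g : D → α) {primal : D → α} {dual : D → Set α}
    (h : ∀ z ∈ X, IsGLB (dual z) (primal z)) :
    sInf {v | ∃ z ∈ X, v = g z + primal z} = sInf {v | ∃ z ∈ X, ∃ c ∈ dual z, v = g z + c} := by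
  obtain ⟨z₀, hz₀⟩ := hX
  obtain ⟨c₀, hc₀⟩ := (h z₀ hz₀).nonempty
  refine sInf_eq_sInf_of_lowerBounds_eq ⟨_, z₀, hz₀, rfl⟩ ⟨_, z₀, hz₀, c₀, hc₀, rfl⟩ ?_
  ext m
  constructor
  · rintro hm _ ⟨z, hz, c, hc, rfl⟩
    exact (hm ⟨z, hz, rfl⟩).trans (add_le_add_right ((h z hz).1 hc) (g z))
  · rintro hm _ ⟨z, hz, rfl⟩
    rw [← sub_le_iff_le_add', le_isGLB_iff (h z hz)]
    exact fun c hc => sub_le_iff_le_add'.mpr (hm ⟨z, hz, c, hc, rfl⟩)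

end Order

section ConicDuality

variable {ι E F : Type*} [Fintype ι]
  [AddCommGroup E] [Module ℝ E] [TopologicalSpace E]
  [AddCommGroup F] [Module ℝ F] [TopologicalSpace F]

/-- The product of two proper cones, as a proper cone of the product space. -/
def properConeProd (C : ProperCone ℝ E) (D : ProperCone ℝ F) : ProperCone ℝ (E × F) :=
  C.comap (.fst ℝ E F) ⊓ D.comap (.snd ℝ E F)

theorem mem_properConeProd {C : ProperCone ℝ E} {D : ProperCone ℝ F} {x : E × F} :
    x ∈ properConeProd C D ↔ x.1 ∈ C ∧ x.2 ∈ D :=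
  Iff.rfl

/-- The feasible set of a conic program over the simplex: the probability weights `p` whose
barycenter `∑ k, p k • a k` lies in the cone `C`. -/
def conicFeasible (C : ProperCone ℝ E) (a : ι → E) : Set (ι → ℝ) :=
  {p ∈ stdSimplex ℝ ι | ∑ k, p k • a k ∈ C}

/-- The dual values of the program `max ∑ k, p k * q k` over `conicFeasible C a`: the `c` for which
some multiplier `f` in the dual cone of `C` brings all Lagrangian coefficients `q k + f (a k)`
below `c`. -/
def conicDualValues (C : ProperCone ℝ E) (a : ι → E) (q : ι → ℝ) : Set ℝ :=
  {c | ∃ f : StrongDual ℝ E, (∀ x ∈ C, 0 ≤ f x) ∧ ∀ k, q k + f (a k) ≤ c}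

variable {C : ProperCone ℝ E} {a : ι → E} {q p : ι → ℝ} {c : ℝ}

theorem sum_mul_le_of_mem_conicDualValues (hc : c ∈ conicDualValues C a q)
    (hp : p ∈ conicFeasible C a) : ∑ k, p k * q k ≤ c := by
  obtain ⟨f, hf, hfc⟩ := hc
  obtain ⟨⟨hp0, hp1⟩, hpC⟩ := hp
  calc ∑ k, p k * q k ≤ ∑ k, p k * q k + f (∑ k, p k • a k) := le_add_of_nonneg_right (hf _ hpC)
    _ = ∑ k, p k * (q k + f (a k)) := by
      simp only [map_sum, map_smul, smul_eq_mul, mul_add, Finset.sum_add_distrib]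
    _ ≤ ∑ k, p k * c := Finset.sum_le_sum fun k _ => mul_le_mul_of_nonneg_left (hfc k) (hp0 k)
    _ = c := by rw [← Finset.sum_mul, hp1, one_mul]

variable (q) in
theorem bddAbove_image_conicFeasible :
    BddAbove ((fun p : ι → ℝ => ∑ k, p k * q k) '' conicFeasible C a) :=
  ((isCompact_stdSimplex ℝ ι).bddAbove_image (by fun_prop)).mono
    (Set.image_mono fun _ hp => hp.1)

variable [IsTopologicalAddGroup E] [ContinuousSMul ℝ E] [LocallyConvexSpace ℝ E]

theorem mem_conicDualValues_of_forall_lt (hne : (conicFeasible C a).Nonempty)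
    (hlt : ∀ p ∈ conicFeasible C a, ∑ k, p k * q k < c) : c ∈ conicDualValues C a q := by
  let L := Fintype.linearCombination ℝ fun k => (q k - c, a k)
  have L_apply : ∀ p ∈ stdSimplex ℝ ι, L p = (∑ k, p k * q k - c, ∑ k, p k • a k) := by
    rintro p ⟨-, hp1⟩
    ext1 <;> simp [L, Fintype.linearCombination_apply, Prod.fst_sum, Prod.snd_sum, mul_sub,
      ← Finset.sum_mul, hp1]
  have hdisj : Disjoint (L '' stdSimplex ℝ ι) (properConeProd (ProperCone.positive ℝ ℝ) C) := by
    rw [Set.disjoint_left]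
    rintro _ ⟨p, hp, rfl⟩ hmem
    rw [L_apply p hp] at hmem
    exact (hlt p ⟨hp, hmem.2⟩).not_ge (sub_nonneg.mp hmem.1)
  obtain ⟨f, hf_nonneg, hf_neg⟩ := ProperCone.hyperplane_separation _
    ((convex_stdSimplex ℝ ι).linear_image L)
    ((isCompact_stdSimplex ℝ ι).image (LinearMap.continuous_on_pi L)) hdisj
  have f_apply : ∀ r x, f (r, x) = r * f (1, 0) + f (0, x) := fun r x => by
    rw [← smul_eq_mul, ← map_smul, ← map_add]
    simp
  have hf_zero : ∀ x ∈ C, 0 ≤ f (0, x) := fun x hx => hf_nonneg _ ⟨le_refl (0 : ℝ), hx⟩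
  -- A vertical hyperplane would separate the barycenter of a feasible point from `C`.
  have hpos : 0 < f (1, 0) := by
    refine (hf_nonneg (1, 0) ⟨zero_le_one' ℝ, C.zero_mem⟩).lt_of_ne fun h0 => ?_
    obtain ⟨p, hp, hpC⟩ := hne
    have hneg := hf_neg _ ⟨p, hp, rfl⟩
    rw [L_apply p hp, f_apply, ← h0, mul_zero, zero_add] at hneg
    exact hneg.not_ge (hf_zero _ hpC)
  refine ⟨(f (1, 0))⁻¹ • f.comp (.inr ℝ ℝ E),
    fun x hx => mul_nonneg (inv_nonneg.mpr hpos.le) (hf_zero x hx), fun k => ?_⟩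
  have hvertex : (q k - c) * f (1, 0) + f (0, a k) < 0 := by
    classical
    simpa [L, ← f_apply] using hf_neg _ ⟨Pi.single k 1, single_mem_stdSimplex ℝ k, rfl⟩
  change q k + (f (1, 0))⁻¹ * f (0, a k) ≤ c
  rw [← le_sub_iff_add_le', inv_mul_le_iff₀ hpos]
  linarith

variable (q) in
theorem isGLB_conicDualValues (hne : (conicFeasible C a).Nonempty) :
    IsGLB (conicDualValues C a q) (sSup ((fun p => ∑ k, p k * q k) '' conicFeasible C a)) := by
  constructor
  · rintro c hc
    exact csSup_le (hne.image _) (Set.forall_mem_image.mpr fun p =>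
      sum_mul_le_of_mem_conicDualValues hc)
  · intro m hm
    refine le_of_forall_gt_imp_ge_of_dense fun c hc => hm ?_
    exact mem_conicDualValues_of_forall_lt hne fun p hp =>
      (le_csSup (bddAbove_image_conicFeasible q) (Set.mem_image_of_mem _ hp)).trans_lt hc

end ConicDuality

section PosSemidefCone

variable {n : Type*}

theorem isClosed_setOf_posSemidef : IsClosed {H : Matrix n n ℝ | H.PosSemidef} := by
  simp only [PosSemidef, Set.ofPred_and, Set.ofPred_forall]
  refine (isClosed_eq (by fun_prop) (by fun_prop)).inter
    (isClosed_iInter fun x => isClosed_le continuous_const ?_)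
  simp only [Finsupp.sum]
  fun_prop

variable (n) in
/-- The proper cone of positive semidefinite matrices. The ambient space consists of all square
matrices, so that its dual cone is pinned down only on Hermitian matrices. -/
def posSemidefCone : ProperCone ℝ (Matrix n n ℝ) where
  carrier := {H | H.PosSemidef}
  add_mem' := .add
  zero_mem' := .zero
  smul_mem' r _ hH := hH.smul r.2
  isClosed' := isClosed_setOf_posSemidef

variable [Fintype n]

theorem frob_eq_trace (A B : Matrix n n ℝ) : frob A B = (Aᵀ * B).trace := by
  simp only [frob, trace, diag_apply, mul_apply, transpose_apply]
  exact Finset.sum_comm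

theorem frob_transpose_right (A B : Matrix n n ℝ) : frob A Bᵀ = frob Aᵀ B :=
  Finset.sum_comm

theorem frob_vecMulVec (x y : n → ℝ) (B : Matrix n n ℝ) :
    frob (vecMulVec x y) B = x ⬝ᵥ B *ᵥ y := by
  rw [frob_eq_trace, transpose_vecMulVec, vecMulVec_mul, trace_vecMulVec, dotProduct_comm,
    dotProduct_mulVec]

/-- The Frobenius inner product `frob` as a bilinear form. -/
def frobBilin : Matrix n n ℝ →ₗ[ℝ] Matrix n n ℝ →ₗ[ℝ] ℝ :=
  LinearMap.mk₂ ℝ frob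
    (fun A A' B => by simp only [frob_eq_trace, transpose_add, add_mul, trace_add])
    (fun r A B => by simp only [frob_eq_trace, transpose_smul, Matrix.smul_mul, trace_smul])
    (fun A B B' => by simp only [frob_eq_trace, mul_add, trace_add])
    (fun r A B => by simp only [frob_eq_trace, Matrix.mul_smul, trace_smul])

theorem frobBilin_apply (A B : Matrix n n ℝ) : frobBilin A B = frob A B :=
  rfl

theorem frob_sub_left (A A' B : Matrix n n ℝ) : frob (A - A') B = frob A B - frob A' B :=
  LinearMap.map_sub₂ frobBilin A A' B

theorem frob_smul_left (r : ℝ) (A B : Matrix n n ℝ) : frob (r • A) B = r * frob A B :=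
  LinearMap.map_smul₂ frobBilin r A B

theorem exists_frob_eq (φ : Matrix n n ℝ →ₗ[ℝ] ℝ) : ∃ W, ∀ A, φ A = frob A W := by
  classical
  refine ⟨of fun i j => φ (single i j 1), fun A => ?_⟩
  conv_lhs => rw [matrix_eq_sum_single A]
  simp only [map_sum, frob, of_apply]
  refine Finset.sum_congr rfl fun i _ => Finset.sum_congr rfl fun j _ => ?_
  rw [← smul_eq_mul, ← map_smul, smul_single, smul_eq_mul, mul_one]

open scoped MatrixOrder Matrix.Norms.L2Operator in
theorem frob_nonneg {A B : Matrix n n ℝ} (hA : A.PosSemidef) (hB : B.PosSemidef) :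
    0 ≤ frob A B := by
  classical
  obtain ⟨R, rfl⟩ := CStarAlgebra.nonneg_iff_eq_star_mul_self.mp hB.nonneg
  rw [star_eq_conjTranspose, frob_eq_trace, ← mul_assoc, trace_mul_comm, ← mul_assoc]
  exact (hA.transpose.mul_mul_conjTranspose_same R).trace_nonneg

theorem posSemidef_of_forall_frob_nonneg {Z : Matrix n n ℝ} (hZ : Z.IsHermitian)
    (h : ∀ H : Matrix n n ℝ, H.PosSemidef → 0 ≤ frob H Z) : Z.PosSemidef :=
  .of_dotProduct_mulVec_nonneg hZ fun x => by
    simpa only [frob_vecMulVec, star_trivial] using h _ (posSemidef_vecMulVec_self_star x)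

theorem exists_posSemidef_frob_eq {φ : Matrix n n ℝ →ₗ[ℝ] ℝ}
    (hφ : ∀ H : Matrix n n ℝ, H.PosSemidef → 0 ≤ φ H) :
    ∃ Z : Matrix n n ℝ, Z.PosSemidef ∧ ∀ H : Matrix n n ℝ, H.IsHermitian → φ H = frob H Z := by
  obtain ⟨W, hW⟩ := exists_frob_eq φ
  let Z : Matrix n n ℝ := (1 / 2 : ℝ) • (W + Wᵀ)
  have hZ : ∀ H : Matrix n n ℝ, H.IsHermitian → φ H = frob H Z := fun H hH => by
    have hHt : Hᵀ = H := by rwa [← conjTranspose_eq_transpose_of_trivial]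
    rw [← frobBilin_apply, map_smul, map_add, frobBilin_apply, frobBilin_apply,
      frob_transpose_right, hHt, hW, smul_eq_mul]
    ring
  have hZ_herm : Z.IsHermitian := by
    simp [Z, IsHermitian, conjTranspose_eq_transpose_of_trivial, add_comm]
  exact ⟨Z, posSemidef_of_forall_frob_nonneg hZ_herm fun H hH => hZ H hH.1 ▸ hφ H hH, hZ⟩

end PosSemidefCone

section SemidefiniteDuality

variable {ι n m : Type*}

instance : LocallyConvexSpace ℝ (Matrix n m ℝ) :=
  inferInstanceAs (LocallyConvexSpace ℝ (n → m → ℝ))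

theorem mem_conicDualValues_posSemidefCone_iff [Fintype n] [Fintype m]
    {G : ι → Matrix n n ℝ} {H : ι → Matrix m m ℝ} (hG : ∀ k, (G k).IsHermitian)
    (hH : ∀ k, (H k).IsHermitian) {q : ι → ℝ} {c : ℝ} :
    c ∈ conicDualValues (properConeProd (posSemidefCone n) (posSemidefCone m))
        (fun k => (G k, H k)) q ↔
      ∃ (Z : Matrix n n ℝ) (Y : Matrix m m ℝ), Z.PosSemidef ∧ Y.PosSemidef ∧
        ∀ k, q k + (frob (G k) Z + frob (H k) Y) ≤ c := by
  constructor
  · rintro ⟨f, hf, hfc⟩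
    obtain ⟨Z, hZ, hfZ⟩ := exists_posSemidef_frob_eq (φ := f.toLinearMap ∘ₗ .inl ℝ _ _)
      fun A hA => hf (A, 0) ⟨hA, .zero⟩
    obtain ⟨Y, hY, hfY⟩ := exists_posSemidef_frob_eq (φ := f.toLinearMap ∘ₗ .inr ℝ _ _)
      fun A hA => hf (0, A) ⟨.zero, hA⟩
    refine ⟨Z, Y, hZ, hY, fun k => ?_⟩
    rw [← hfZ _ (hG k), ← hfY _ (hH k)]
    simpa [← map_add] using hfc k
  · rintro ⟨Z, Y, hZ, hY, hc⟩
    exact ⟨((frobBilin.flip Z).coprod (frobBilin.flip Y)).toContinuousLinearMap,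
      fun A hA => add_nonneg (frob_nonneg hA.1 hZ) (frob_nonneg hA.2 hY), hc⟩

end SemidefiniteDuality

section Type3

variable {K J : ℕ} {ξ : Fin K → Fin J → ℝ} {μ : Fin J → ℝ} {S : Matrix (Fin J) (Fin J) ℝ}
  {γ η : ℝ} {q : Fin K → ℝ}

theorem frob_blockMat (A z₁ : Matrix (Fin J) (Fin J) ℝ) (b z₂ : Fin J → ℝ) (c z₃ : ℝ) :
    frob (blockMat A b c) (blockMat z₁ z₂ z₃) = frob A z₁ + 2 * (b ⬝ᵥ z₂) + c * z₃ := by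
  simp only [frob, blockMat, Fintype.sum_sum_type, fromBlocks_apply₁₁, fromBlocks_apply₁₂,
    fromBlocks_apply₂₁, fromBlocks_apply₂₂, of_apply, Finset.univ_unique, Finset.sum_singleton,
    Finset.sum_add_distrib, dotProduct]
  ring

theorem isHermitian_blockMat {A : Matrix (Fin J) (Fin J) ℝ} (hA : A.IsHermitian) (b : Fin J → ℝ)
    (c : ℝ) : (blockMat A b c).IsHermitian :=
  hA.fromBlocks rfl rfl

theorem exists_eq_blockMat {Z : Matrix (Fin J ⊕ Unit) (Fin J ⊕ Unit) ℝ} (hZ : Z.IsHermitian) :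
    ∃ z₁ z₂ z₃, Z = blockMat z₁ z₂ z₃ := by
  refine ⟨Z.toBlocks₁₁, fun i => Z (.inl i) (.inr ()), Z (.inr ()) (.inr ()), ?_⟩
  ext (i | i) (j | j)
  · rfl
  · rfl
  · exact (hZ.apply (.inr i) (.inl j)).symm
  · rfl

theorem posSemidef_blockMat_iff (hS : S.PosDef) (b : Fin J → ℝ) (c : ℝ) :
    (blockMat S b c).PosSemidef ↔ b ⬝ᵥ (S⁻¹ *ᵥ b) ≤ c := by
  have := hS.isUnit.invertible
  have schur := hS.fromBlocks₁₁ (replicateCol Unit b) (of fun _ _ : Unit => c)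
  have hdiag : (of fun _ _ : Unit => c) - (replicateCol Unit b)ᴴ * S⁻¹ * replicateCol Unit b =
      diagonal fun _ => c - b ⬝ᵥ (S⁻¹ *ᵥ b) := by
    ext i j
    simp [Matrix.mul_assoc, mul_apply, dotProduct, mulVec]
  rw [hdiag, posSemidef_diagonal_iff] at schur
  exact schur.trans (by simp)

theorem sum_smul_blockMat {p : Fin K → ℝ} (hp : ∑ k, p k = 1) :
    ∑ k, p k • blockMat S (ξ k - μ) γ = blockMat S ((fun j => ∑ k, p k * ξ k j) - μ) γ := by
  ext (i | i) (j | j) <;>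
    simp [blockMat, Matrix.sum_apply, mul_sub, Finset.sum_sub_distrib, ← Finset.sum_mul, hp]

theorem sum_smul_sub_vecMulVec {p : Fin K → ℝ} (hp : ∑ k, p k = 1) :
    ∑ k, p k • (η • S - vecMulVec (ξ k - μ) (ξ k - μ)) =
      η • S - ∑ k, p k • vecMulVec (ξ k - μ) (ξ k - μ) := by
  simp only [smul_sub, Finset.sum_sub_distrib, ← Finset.sum_smul, hp, one_smul]

/-- The conic data of the ambiguity set `Type3Set`, one pair of matrices per support point: their
`p`-averages are positive semidefinite exactly when `p` satisfies the mean constraint (in Schur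
complement form) and the second moment constraint. -/
def type3Blocks (ξ : Fin K → Fin J → ℝ) (μ : Fin J → ℝ) (S : Matrix (Fin J) (Fin J) ℝ) (γ η : ℝ)
    (k : Fin K) : Matrix (Fin J ⊕ Unit) (Fin J ⊕ Unit) ℝ × Matrix (Fin J) (Fin J) ℝ :=
  (blockMat S (ξ k - μ) γ, η • S - vecMulVec (ξ k - μ) (ξ k - μ))

theorem type3Set_eq_conicFeasible (hS : S.PosDef) :
    Type3Set K J ξ μ S γ η =
      conicFeasible (properConeProd (posSemidefCone (Fin J ⊕ Unit)) (posSemidefCone (Fin J)))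
        (type3Blocks ξ μ S γ η) := by
  ext p
  have hmem : (∀ k, 0 ≤ p k) ∧ ∑ k, p k = 1 →
      ((∑ k, p k • type3Blocks ξ μ S γ η k ∈
          properConeProd (posSemidefCone (Fin J ⊕ Unit)) (posSemidefCone (Fin J))) ↔
        ((fun j => ∑ k, p k * ξ k j) - μ) ⬝ᵥ (S⁻¹ *ᵥ ((fun j => ∑ k, p k * ξ k j) - μ)) ≤ γ ∧
        (η • S - ∑ k, p k • vecMulVec (ξ k - μ) (ξ k - μ)).PosSemidef) := by
    rintro ⟨-, hp⟩
    rw [mem_properConeProd, Prod.fst_sum, Prod.snd_sum, ← posSemidef_blockMat_iff hS,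
      ← sum_smul_blockMat hp, ← sum_smul_sub_vecMulVec hp]
    rfl
  exact and_assoc.symm.trans (and_congr_right hmem).symm

/-- The objective values, without the term `g (x, y)`, of the feasible points of the semidefinite
program dual to maximizing `∑ k, p k * q k` over `Type3Set K J ξ μ S γ η`. -/
def type3DualValues (ξ : Fin K → Fin J → ℝ) (μ : Fin J → ℝ) (S : Matrix (Fin J) (Fin J) ℝ)
    (γ η : ℝ) (q : Fin K → ℝ) : Set ℝ :=
  {c | ∃ s z₃ : ℝ, ∃ z₁ Y : Matrix (Fin J) (Fin J) ℝ, ∃ z₂ : Fin J → ℝ,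
    (blockMat z₁ z₂ z₃).PosSemidef ∧ Y.PosSemidef ∧
    (∀ k, q k ≤ s - 2 * (∑ j, z₂ j * ξ k j) +
      frob (vecMulVec (fun j => ξ k j - μ j) (fun j => ξ k j - μ j)) Y) ∧
    c = s + frob S z₁ - 2 * (∑ j, μ j * z₂ j) + γ * z₃ + η * frob S Y}

theorem mem_type3DualValues_iff {c : ℝ} :
    c ∈ type3DualValues ξ μ S γ η q ↔
      ∃ (Z : Matrix (Fin J ⊕ Unit) (Fin J ⊕ Unit) ℝ) (Y : Matrix (Fin J) (Fin J) ℝ),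
        Z.PosSemidef ∧ Y.PosSemidef ∧
        ∀ k, q k + (frob (type3Blocks ξ μ S γ η k).1 Z + frob (type3Blocks ξ μ S γ η k).2 Y)
          ≤ c := by
  have hfrob : ∀ k z₁ z₂ z₃ Y,
      frob (type3Blocks ξ μ S γ η k).1 (blockMat z₁ z₂ z₃) + frob (type3Blocks ξ μ S γ η k).2 Y =
        frob S z₁ - 2 * (∑ j, μ j * z₂ j) + γ * z₃ + η * frob S Y + 2 * (∑ j, z₂ j * ξ k j) -
          frob (vecMulVec (ξ k - μ) (ξ k - μ)) Y := fun k z₁ z₂ z₃ Y => by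
    rw [type3Blocks, frob_blockMat, frob_sub_left, frob_smul_left, sub_dotProduct,
      dotProduct_comm (ξ k)]
    simp only [dotProduct]
    ring
  constructor
  · rintro ⟨s, z₃, z₁, Y, z₂, hZ, hY, hs, rfl⟩
    refine ⟨blockMat z₁ z₂ z₃, Y, hZ, hY, fun k => ?_⟩
    have hk : q k ≤ s - 2 * (∑ j, z₂ j * ξ k j) + frob (vecMulVec (ξ k - μ) (ξ k - μ)) Y := hs k
    rw [hfrob]
    linarith
  · rintro ⟨Z, Y, hZ, hY, hc⟩
    obtain ⟨z₁, z₂, z₃, rfl⟩ := exists_eq_blockMat hZ.isHermitian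
    refine ⟨c - (frob S z₁ - 2 * (∑ j, μ j * z₂ j) + γ * z₃ + η * frob S Y), z₃, z₁, Y, z₂, hZ, hY,
      fun k => ?_, by ring⟩
    change q k ≤ _ - _ + frob (vecMulVec (ξ k - μ) (ξ k - μ)) Y
    have hk := hc k
    rw [hfrob] at hk
    linarith

theorem type3DualValues_eq_conicDualValues (hS : S.IsHermitian) :
    type3DualValues ξ μ S γ η q =
      conicDualValues (properConeProd (posSemidefCone (Fin J ⊕ Unit)) (posSemidefCone (Fin J)))
        (type3Blocks ξ μ S γ η) q := by
  ext c
  have hvec : ∀ v : Fin J → ℝ, (vecMulVec v v).IsHermitian := fun v =>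
    (posSemidef_vecMulVec_self_star v).isHermitian
  rw [mem_type3DualValues_iff]
  exact (mem_conicDualValues_posSemidefCone_iff (fun k => isHermitian_blockMat hS (ξ k - μ) γ)
    fun k => (hS.smul (.all η)).sub (hvec (ξ k - μ))).symm

variable (q) in
theorem isGLB_type3DualValues (hS : S.PosDef) (hne : (Type3Set K J ξ μ S γ η).Nonempty) :
    IsGLB (type3DualValues ξ μ S γ η q)
      (sSup {r | ∃ p ∈ Type3Set K J ξ μ S γ η, r = ∑ k, p k * q k}) := by
  have himage : {r | ∃ p ∈ Type3Set K J ξ μ S γ η, r = ∑ k, p k * q k} =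
      (fun p => ∑ k, p k * q k) '' Type3Set K J ξ μ S γ η := by
    simp only [Set.image, eq_comm]
  rw [himage, type3DualValues_eq_conicDualValues hS.isHermitian]
  rw [type3Set_eq_conicFeasible hS] at hne ⊢
  exact isGLB_conicDualValues q hne

end Type3

theorem stmt4_general {D : Type*} {K J : ℕ} {X : Set D} (hX : X.Nonempty) (g : D → ℝ)
    (Q : D → Fin K → ℝ) (ξ : Fin K → Fin J → ℝ) (γ η : ℝ) (μ : D → Fin J → ℝ)
    (S : D → Matrix (Fin J) (Fin J) ℝ) (hS : ∀ z ∈ X, (S z).PosDef)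
    (hne : ∀ z ∈ X, (Type3Set K J ξ (μ z) (S z) γ η).Nonempty) :
    sInf {v : ℝ | ∃ z ∈ X,
        v = g z + sSup {r : ℝ | ∃ p ∈ Type3Set K J ξ (μ z) (S z) γ η, r = ∑ k, p k * Q z k}} =
    sInf {v : ℝ | ∃ z ∈ X, ∃ s z₃ : ℝ, ∃ z₁ Y : Matrix (Fin J) (Fin J) ℝ, ∃ z₂ : Fin J → ℝ,
        (blockMat z₁ z₂ z₃).PosSemidef ∧ Y.PosSemidef ∧
        (∀ k, Q z k ≤ s - 2 * (∑ j, z₂ j * ξ k j) +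
          frob (vecMulVec (fun j => ξ k j - μ z j) (fun j => ξ k j - μ z j)) Y) ∧
        v = g z + s + frob (S z) z₁ - 2 * (∑ j, μ z j * z₂ j) + γ * z₃ + η * frob (S z) Y} := by
  refine (sInf_add_eq_sInf_add_of_isGLB hX g fun z hz =>
    isGLB_type3DualValues (Q z) (hS z hz) (hne z hz)).trans (congrArg sInf ?_)
  ext v
  refine exists_congr fun z => and_congr_right fun _ => ⟨?_, ?_⟩
  · rintro ⟨_, ⟨s, z₃, z₁, Y, z₂, hZ, hY, hs, rfl⟩, rfl⟩
    exact ⟨s, z₃, z₁, Y, z₂, hZ, hY, hs, by ring⟩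
  · rintro ⟨s, z₃, z₁, Y, z₂, hZ, hY, hs, rfl⟩
    exact ⟨_, ⟨s, z₃, z₁, Y, z₂, hZ, hY, hs, rfl⟩, by ring⟩

theorem stmt4 (I d K J : ℕ) (hI : 0 < I) (hd : 0 < d) (hK : 0 < K) (hJ : 0 < J)
    (X : Set ((Fin I → ℝ) × (Fin d → ℝ))) (hXne : X.Nonempty)
    (hXbin : ∀ z ∈ X, ∀ i, z.1 i = 0 ∨ z.1 i = 1)
    (g : (Fin I → ℝ) × (Fin d → ℝ) → ℝ)
    (Q : (Fin I → ℝ) → Fin K → ℝ)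
    (ξ : Fin K → Fin J → ℝ) (γ η : ℝ)
    (μ : (Fin I → ℝ) → Fin J → ℝ)
    (S : (Fin I → ℝ) → Matrix (Fin J) (Fin J) ℝ)
    (hSpd : ∀ x : Fin I → ℝ, (S x).PosDef)
    (hslater : ∀ x : Fin I → ℝ, (∃ y, (x, y) ∈ X) →
      ∃ p : Fin K → ℝ, (∀ k, 0 ≤ p k) ∧ (∑ k, p k) = 1 ∧
        (fun j => (∑ k, p k * ξ k j) - μ x j) ⬝ᵥ
          ((S x)⁻¹ *ᵥ fun j => (∑ k, p k * ξ k j) - μ x j) < γ ∧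
        (η • S x -
          ∑ k, p k • Matrix.vecMulVec (fun j => ξ k j - μ x j)
            (fun j => ξ k j - μ x j)).PosDef) :
    sInf {v : ℝ | ∃ z ∈ X,
        v = g z + sSup {r : ℝ | ∃ p ∈ Type3Set K J ξ (μ z.1) (S z.1) γ η,
          r = ∑ k, p k * Q z.1 k}} =
    sInf {v : ℝ | ∃ z ∈ X, ∃ s z₃ : ℝ, ∃ z₁ Y : Matrix (Fin J) (Fin J) ℝ, ∃ z₂ : Fin J → ℝ,
        (blockMat z₁ z₂ z₃).PosSemidef ∧ Y.PosSemidef ∧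
        (∀ k, Q z.1 k ≤ s - 2 * (∑ j, z₂ j * ξ k j) +
          frob (Matrix.vecMulVec (fun j => ξ k j - μ z.1 j) (fun j => ξ k j - μ z.1 j)) Y) ∧
        v = g z + s + frob (S z.1) z₁ - 2 * (∑ j, μ z.1 j * z₂ j) + γ * z₃
            + η * frob (S z.1) Y} := by
  refine stmt4_general hXne g (fun z => Q z.1) ξ γ η (fun z => μ z.1) (fun z => S z.1)
    (fun z _ => hSpd z.1) fun z hz => ?_
  obtain ⟨p, hp0, hp1, hmean, hcov⟩ := hslater z.1 ⟨z.2, hz⟩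
  exact ⟨p, hp0, hp1, hmean.le, hcov.posSemidef⟩
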